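/- Let p be a prime number. Then Γ(ℤ₂ × ℤ₂ × ℤ_p) is partitionable into global defensive alliances if and only if p ∈ {2, 3}; namely, ψ_g(Γ(ℤ₂ × ℤ₂ × ℤ_p)) = 2 if p ∈ {2, 3}, and ψ_g(Γ(ℤ₂ × ℤ₂ × ℤ_p)) = 1 otherwise. -/

import Mathlib

open Classical

/-- The set of zero-divisors of `R` (including `0`). -/
def zeroDivisorSet (R : Type*) [CommRing R] : Set R :=
  {x : R | ∃ y : R, y ≠ 0 ∧ x * y = 0}

/-- Vertices of the zero-divisor graph: the nonzero zero-divisors of `R`. -/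
abbrev ZDV (R : Type*) [CommRing R] : Type _ :=
  {x : R // x ≠ 0 ∧ ∃ y : R, y ≠ 0 ∧ x * y = 0}

/-- The zero-divisor graph `Γ(R)` of a commutative ring `R`: vertices are the nonzero
zero-divisors, and distinct vertices `x`, `y` are adjacent iff `x * y = 0`. -/
def zdGraph (R : Type*) [CommRing R] : SimpleGraph (ZDV R) where
  Adj a b := a ≠ b ∧ (a : R) * (b : R) = 0
  symm := by
    constructor
    intro a b h
    exact ⟨h.1.symm, by rw [mul_comm]; exact h.2⟩
  loopless := by
    constructor
    intro a h
    exact h.1 rfl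

/-- `degIn G S v` is the number of neighbors of `v` lying in `S`. -/
noncomputable def degIn {V : Type*} (G : SimpleGraph V) (S : Set V) (v : V) : ℕ :=
  Set.ncard {u : V | u ∈ S ∧ G.Adj v u}

/-- `S` is a dominating set: every vertex outside `S` has a neighbor in `S`. -/
def IsDominatingSet {V : Type*} (G : SimpleGraph V) (S : Set V) : Prop :=
  ∀ v ∉ S, ∃ u ∈ S, G.Adj v u

/-- `S` is a defensive alliance: `S` is nonempty and every `v ∈ S` satisfies
`deg_S(v) + 1 ≥ deg_{Sᶜ}(v)`. -/
def IsDefensiveAlliance {V : Type*} (G : SimpleGraph V) (S : Set V) : Prop :=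
  S.Nonempty ∧ ∀ v ∈ S, degIn G Sᶜ v ≤ degIn G S v + 1

/-- A global defensive alliance is a defensive alliance that is also a dominating set. -/
def IsGlobalDefensiveAlliance {V : Type*} (G : SimpleGraph V) (S : Set V) : Prop :=
  IsDefensiveAlliance G S ∧ IsDominatingSet G S

/-- `P` is a partition of the vertex set of `G` into global defensive alliances. -/
def IsGDAPartition {V : Type*} (G : SimpleGraph V) (P : Finset (Set V)) : Prop :=
  (∀ S ∈ P, IsGlobalDefensiveAlliance G S) ∧
  (⋃₀ (P : Set (Set V)) = Set.univ) ∧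
  ((P : Set (Set V)).Pairwise Disjoint)

/-- The global defensive alliance partition number `ψ_g(G)`: the maximum number of parts in
a partition of the vertex set into global defensive alliances. -/
noncomputable def psiG {V : Type*} (G : SimpleGraph V) : ℕ :=
  sSup {n : ℕ | ∃ P : Finset (Set V), IsGDAPartition G P ∧ P.card = n}

/-- `G` is partitionable into global defensive alliances iff `ψ_g(G) ≥ 2`. -/
def PartitionableGDA {V : Type*} (G : SimpleGraph V) : Prop :=
  2 ≤ psiG G

/-- The global defensive alliance number `γ_a(G)`: the minimum cardinality of a global
defensive alliance. -/
noncomputable def gammaA {V : Type*} (G : SimpleGraph V) : ℕ :=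
  sInf {n : ℕ | ∃ S : Set V, IsGlobalDefensiveAlliance G S ∧ S.ncard = n}

/-!
A union of global defensive alliances is one, so a finite graph is partitionable iff some set `S`
and its complement are both global defensive alliances; and each of them meets every closed
neighbourhood, so `ψ_g ≤ δ + 1`. Write `a = (1, 0, 0)`, `b = (0, 1, 0)`.

In `Γ(ℤ₂ × ℤ₂ × K)` the vertices `(1, 0, u)` are leaves hanging from `b`, whence `ψ_g ≤ 2`.
Let `c = |Kˣ|` and suppose `S` and `Sᶜ` are global defensive alliances. If `b ∈ S`, then `Sᶜ`
contains all `c` leaves at `b`, and `b`, of degree `2c + 1`, is defended only if `S` contains at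
least `c - 1` of the `(0, 0, u)`, and all `c` of them if `a ∉ S`; likewise with `a` and `b`
exchanged. As `S` and `Sᶜ` cannot both contain all `(0, 0, u)`, the vertices `a` and `b` lie on the
same side, say in `S`. To dominate some `(0, 0, u) ∈ S`, the other side must contain `(1, 1, 0)`,
which has degree `c` and at most one neighbour in `Sᶜ`, so that `c ≤ 2 · 1 + 1`, that is,
`|K| ≤ 4`. Conversely, if `|K| ≤ 4`, then `a`, `b` and `⌊|K| / 2⌋` of the `(0, 0, u)` form one side
of such a splitting.
-/

section Graph

variable {V : Type*} {G : SimpleGraph V} {S : Set V} {v : V}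

theorem degIn_eq_ncard_inter_neighborSet (G : SimpleGraph V) (S : Set V) (v : V) :
    degIn G S v = (S ∩ G.neighborSet v).ncard :=
  rfl

theorem degIn_mono [Finite V] {T : Set V} (h : S ⊆ T) : degIn G S v ≤ degIn G T v :=
  Set.ncard_le_ncard fun _ hu => ⟨h hu.1, hu.2⟩

theorem degIn_pos [Finite V] {u : V} (hu : u ∈ S) (huv : G.Adj v u) : 0 < degIn G S v :=
  (Set.ncard_pos).2 ⟨u, hu, huv⟩

theorem degIn_add_degIn_compl [Finite V] (G : SimpleGraph V) (S : Set V) (v : V) :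
    degIn G S v + degIn G Sᶜ v = (G.neighborSet v).ncard := by
  simp only [degIn_eq_ncard_inter_neighborSet, Set.inter_comm _ (G.neighborSet v)]
  rw [← Set.sdiff_eq, Set.ncard_inter_add_ncard_sdiff_eq_ncard]

theorem degIn_compl_le_degIn_add_one_iff [Finite V] :
    degIn G Sᶜ v ≤ degIn G S v + 1 ↔ (G.neighborSet v).ncard ≤ 2 * degIn G S v + 1 := by
  have := degIn_add_degIn_compl G S v
  omega

theorem IsGlobalDefensiveAlliance.ncard_neighborSet_le [Finite V]
    (hS : IsGlobalDefensiveAlliance G S) (hv : v ∈ S) :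
    (G.neighborSet v).ncard ≤ 2 * degIn G S v + 1 :=
  degIn_compl_le_degIn_add_one_iff.1 (hS.1.2 v hv)

theorem IsGlobalDefensiveAlliance.sUnion [Finite V] {Q : Set (Set V)} (hQ : Q.Nonempty)
    (h : ∀ S ∈ Q, IsGlobalDefensiveAlliance G S) : IsGlobalDefensiveAlliance G (⋃₀ Q) := by
  obtain ⟨S, hS⟩ := hQ
  refine ⟨⟨(h S hS).1.1.mono (Set.subset_sUnion_of_mem hS), ?_⟩, fun v hv => ?_⟩
  · rintro v ⟨T, hT, hvT⟩
    have hTQ : T ⊆ ⋃₀ Q := Set.subset_sUnion_of_mem hT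
    calc degIn G (⋃₀ Q)ᶜ v ≤ degIn G Tᶜ v := degIn_mono (Set.compl_subset_compl.2 hTQ)
      _ ≤ degIn G T v + 1 := (h T hT).1.2 v hvT
      _ ≤ degIn G (⋃₀ Q) v + 1 := Nat.succ_le_succ (degIn_mono hTQ)
  · obtain ⟨u, hu, huv⟩ := (h S hS).2 v fun hvS => hv ⟨S, hS, hvS⟩
    exact ⟨u, ⟨S, hS, hu⟩, huv⟩

theorem isGlobalDefensiveAlliance_univ [Nonempty V] (G : SimpleGraph V) :
    IsGlobalDefensiveAlliance G Set.univ :=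
  ⟨⟨Set.univ_nonempty, fun v _ => by simp [degIn]⟩, fun v hv => absurd (Set.mem_univ v) hv⟩

theorem isGDAPartition_singleton_univ [Nonempty V] (G : SimpleGraph V) :
    IsGDAPartition G {Set.univ} := by
  refine ⟨fun S hS => ?_, by simp, by simp⟩
  rw [Finset.mem_singleton.1 hS]
  exact isGlobalDefensiveAlliance_univ G

theorem isGDAPartition_pair_compl (hS : IsGlobalDefensiveAlliance G S)
    (hSc : IsGlobalDefensiveAlliance G Sᶜ) : IsGDAPartition G {S, Sᶜ} := by
  refine ⟨by simp [hS, hSc], by simp, ?_⟩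
  rw [Finset.coe_pair, Set.pairwise_pair]
  exact fun _ => ⟨disjoint_compl_right, disjoint_compl_left⟩

theorem IsGDAPartition.compl_eq_sUnion {P : Finset (Set V)} (hP : IsGDAPartition G P)
    (hS : S ∈ P) : Sᶜ = ⋃₀ {T | T ∈ P ∧ T ≠ S} := by
  ext v
  constructor
  · intro hv
    obtain ⟨T, hT, hvT⟩ : v ∈ ⋃₀ (P : Set (Set V)) := hP.2.1 ▸ Set.mem_univ v
    exact ⟨T, ⟨hT, fun hTS => hv (hTS ▸ hvT)⟩, hvT⟩
  · rintro ⟨T, ⟨hT, hTS⟩, hvT⟩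
    exact Set.disjoint_left.1 (hP.2.2 hT hS hTS) hvT

theorem IsGDAPartition.card_le_ncard_neighborSet_add_one {P : Finset (Set V)}
    (hP : IsGDAPartition G P) (hv : (G.neighborSet v).Finite) :
    P.card ≤ (G.neighborSet v).ncard + 1 := by
  have hfin : (insert v (G.neighborSet v)).Finite := hv.insert v
  suffices P.card ≤ hfin.toFinset.card by
    rw [← Set.ncard_eq_toFinset_card _ hfin] at this
    exact this.trans (Set.ncard_insert_le _ _)
  refine Finset.card_le_card_of_forall_subsingleton (fun S u => u ∈ S) (fun S hS => ?_) ?_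
  · by_cases hvS : v ∈ S
    · exact ⟨v, by simp, hvS⟩
    · obtain ⟨u, hu, hvu⟩ := (hP.1 S hS).2 v hvS
      exact ⟨u, by simp [hvu], hu⟩
  · rintro u - S ⟨hS, huS⟩ T ⟨hT, huT⟩
    exact Set.PairwiseDisjoint.elim hP.2.2 hS hT (Set.not_disjoint_iff.2 ⟨u, huS, huT⟩)

theorem psiG_le_ncard_neighborSet_add_one (hv : (G.neighborSet v).Finite) :
    psiG G ≤ (G.neighborSet v).ncard + 1 := by
  refine csSup_le' ?_
  rintro n ⟨P, hP, rfl⟩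
  exact hP.card_le_ncard_neighborSet_add_one hv

theorem IsGDAPartition.card_le_psiG [Finite V] {P : Finset (Set V)} (hP : IsGDAPartition G P) :
    P.card ≤ psiG G := by
  have := Fintype.ofFinite V
  refine le_csSup ⟨Fintype.card (Set V), ?_⟩ ⟨P, hP, rfl⟩
  rintro n ⟨Q, -, rfl⟩
  exact Q.card_le_univ

theorem one_le_psiG [Finite V] [Nonempty V] (G : SimpleGraph V) : 1 ≤ psiG G :=
  (isGDAPartition_singleton_univ G).card_le_psiG

theorem partitionableGDA_iff_exists_compl [Finite V] :
    PartitionableGDA G ↔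
      ∃ S, IsGlobalDefensiveAlliance G S ∧ IsGlobalDefensiveAlliance G Sᶜ := by
  constructor
  · intro h
    obtain ⟨_, ⟨P, hP, rfl⟩, hcard⟩ := exists_lt_of_lt_csSup' (Nat.lt_of_succ_le h)
    obtain ⟨S, hS, T, hT, hST⟩ := Finset.one_lt_card.1 hcard
    refine ⟨S, hP.1 S hS, ?_⟩
    rw [hP.compl_eq_sUnion hS]
    exact .sUnion ⟨T, hT, hST.symm⟩ fun U hU => hP.1 U hU.1
  · rintro ⟨S, hS, hSc⟩
    have hne : S ≠ Sᶜ := have := hS.1.1.to_type; ne_compl_self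
    rw [PartitionableGDA, ← Finset.card_pair hne]
    exact (isGDAPartition_pair_compl hS hSc).card_le_psiG

end Graph

namespace ZDV

variable {K : Type*} [Field K]

/-- The two nontrivial idempotents `(1, 0)` and `(0, 1)` of `ℤ₂ × ℤ₂`, indexed by `Bool` so that
`!` exchanges them. -/
def idem : Bool → ZMod 2 × ZMod 2
  | false => (1, 0)
  | true => (0, 1)

/-- The vertices `(1, 0, 0)` and `(0, 1, 0)` of `Γ(ℤ₂ × ℤ₂ × K)`. -/
def axis (i : Bool) : ZDV (ZMod 2 × ZMod 2 × K) :=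
  ⟨((idem i).1, (idem i).2, 0), by cases i <;> simp [idem], (0, 0, 1), by simp, by simp⟩

/-- The vertex `(1, 1, 0)` of `Γ(ℤ₂ × ℤ₂ × K)`. -/
def plane : ZDV (ZMod 2 × ZMod 2 × K) :=
  ⟨(1, 1, 0), by simp, (0, 0, 1), by simp, by simp⟩

/-- The vertex `(0, 0, u)` of `Γ(ℤ₂ × ℤ₂ × K)`, for `u ≠ 0`. -/
def line (u : Kˣ) : ZDV (ZMod 2 × ZMod 2 × K) :=
  ⟨(0, 0, u), by simp, (1, 0, 0), by simp, by simp⟩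

/-- The vertices `(1, 0, u)` and `(0, 1, u)` of `Γ(ℤ₂ × ℤ₂ × K)`, for `u ≠ 0`. -/
def mixed (i : Bool) (u : Kˣ) : ZDV (ZMod 2 × ZMod 2 × K) :=
  ⟨((idem i).1, (idem i).2, u), by simp, ((idem !i).1, (idem !i).2, 0),
    by cases i <;> simp [idem], by cases i <;> simp [idem]⟩

theorem line_injective : Function.Injective (line (K := K)) := by
  intro u w h
  simpa [line, Units.ext_iff] using h

theorem mixed_injective (i : Bool) : Function.Injective (mixed (K := K) i) := by
  intro u w h
  simpa [mixed, Units.ext_iff] using h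

theorem axis_injective : Function.Injective (axis (K := K)) := by
  rintro (_ | _) (_ | _) h <;> simp_all [axis, idem]

theorem axis_ne_plane (i : Bool) : axis i ≠ plane (K := K) := by
  cases i <;> simp [axis, plane, idem]

theorem axis_ne_line (i : Bool) (u : Kˣ) : axis i ≠ line u := by
  simp [axis, line, u.ne_zero.symm]

theorem axis_ne_mixed (i j : Bool) (u : Kˣ) : axis i ≠ mixed j u := by
  simp [axis, mixed, u.ne_zero.symm]

theorem plane_ne_line (u : Kˣ) : plane ≠ line u := by
  simp [plane, line]

theorem line_ne_mixed (u : Kˣ) (i : Bool) (w : Kˣ) : line u ≠ mixed i w := by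
  cases i <;> simp [line, mixed, idem]

theorem eq_axis_or_plane_or_line_or_mixed (v : ZDV (ZMod 2 × ZMod 2 × K)) :
    (∃ i, v = axis i) ∨ v = plane ∨ (∃ u, v = line u) ∨ ∃ i u, v = mixed i u := by
  obtain ⟨⟨x, y, z⟩, hne, t, ht, hmul⟩ := v
  have zero_or_one : ∀ x : ZMod 2, x = 0 ∨ x = 1 := by decide
  rcases eq_or_ne z 0 with rfl | hz
  · rcases zero_or_one x with rfl | rfl <;> rcases zero_or_one y with rfl | rfl
    · exact absurd rfl hne
    · exact .inl ⟨true, rfl⟩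
    · exact .inl ⟨false, rfl⟩
    · exact .inr (.inl rfl)
  · rcases zero_or_one x with rfl | rfl <;> rcases zero_or_one y with rfl | rfl
    · exact .inr (.inr (.inl ⟨.mk0 z hz, rfl⟩))
    · exact .inr (.inr (.inr ⟨true, .mk0 z hz, rfl⟩))
    · exact .inr (.inr (.inr ⟨false, .mk0 z hz, rfl⟩))
    · refine absurd ?_ ht
      simpa [Prod.ext_iff, hz] using hmul

theorem neighborSet_axis (i : Bool) :
    (zdGraph (ZMod 2 × ZMod 2 × K)).neighborSet (axis i) =
      insert (axis !i) (Set.range line ∪ Set.range (mixed !i)) := by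
  ext v
  rcases eq_axis_or_plane_or_line_or_mixed v with
    ⟨_ | _, rfl⟩ | rfl | ⟨w, rfl⟩ | ⟨_ | _, w, rfl⟩ <;>
    cases i <;> simp [zdGraph, axis, plane, line, mixed, idem]

theorem neighborSet_plane :
    (zdGraph (ZMod 2 × ZMod 2 × K)).neighborSet plane = Set.range line := by
  ext v
  rcases eq_axis_or_plane_or_line_or_mixed v with
    ⟨_ | _, rfl⟩ | rfl | ⟨w, rfl⟩ | ⟨_ | _, w, rfl⟩ <;>
    simp [zdGraph, axis, plane, line, mixed, idem]

theorem neighborSet_line (u : Kˣ) :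
    (zdGraph (ZMod 2 × ZMod 2 × K)).neighborSet (line u) = insert plane (Set.range axis) := by
  ext v
  rcases eq_axis_or_plane_or_line_or_mixed v with
    ⟨_ | _, rfl⟩ | rfl | ⟨w, rfl⟩ | ⟨_ | _, w, rfl⟩ <;>
    simp [zdGraph, axis, plane, line, mixed, idem]

theorem neighborSet_mixed (i : Bool) (u : Kˣ) :
    (zdGraph (ZMod 2 × ZMod 2 × K)).neighborSet (mixed i u) = {axis !i} := by
  ext v
  rcases eq_axis_or_plane_or_line_or_mixed v with
    ⟨_ | _, rfl⟩ | rfl | ⟨w, rfl⟩ | ⟨_ | _, w, rfl⟩ <;>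
    cases i <;> simp [zdGraph, axis, plane, line, mixed, idem]

theorem axis_adj_line (i : Bool) (u : Kˣ) :
    (zdGraph (ZMod 2 × ZMod 2 × K)).Adj (axis i) (line u) := by
  simp [← SimpleGraph.mem_neighborSet, neighborSet_axis]

theorem axis_adj_mixed (i : Bool) (u : Kˣ) :
    (zdGraph (ZMod 2 × ZMod 2 × K)).Adj (axis !i) (mixed i u) := by
  simp [← SimpleGraph.mem_neighborSet, neighborSet_axis]

theorem plane_adj_line (u : Kˣ) :
    (zdGraph (ZMod 2 × ZMod 2 × K)).Adj plane (line u) := by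
  simp [← SimpleGraph.mem_neighborSet, neighborSet_plane]

theorem ncard_neighborSet_mixed (i : Bool) (u : Kˣ) :
    ((zdGraph (ZMod 2 × ZMod 2 × K)).neighborSet (mixed i u)).ncard = 1 := by
  rw [neighborSet_mixed, Set.ncard_singleton]

theorem ncard_neighborSet_plane :
    ((zdGraph (ZMod 2 × ZMod 2 × K)).neighborSet plane).ncard = Nat.card Kˣ := by
  rw [neighborSet_plane, Set.ncard_range_of_injective line_injective]

theorem ncard_neighborSet_line (u : Kˣ) :
    ((zdGraph (ZMod 2 × ZMod 2 × K)).neighborSet (line u)).ncard = 3 := by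
  have plane_notMem : (plane : ZDV (ZMod 2 × ZMod 2 × K)) ∉ Set.range axis :=
    fun ⟨i, hi⟩ => axis_ne_plane i hi
  rw [neighborSet_line, Set.ncard_insert_of_notMem plane_notMem,
    Set.ncard_range_of_injective axis_injective, Nat.card_eq_fintype_card, Fintype.card_bool]

theorem ncard_neighborSet_axis [Finite K] (i : Bool) :
    ((zdGraph (ZMod 2 × ZMod 2 × K)).neighborSet (axis i)).ncard = 2 * Nat.card Kˣ + 1 := by
  have axis_notMem : axis (!i) ∉ Set.range (line (K := K)) ∪ Set.range (mixed !i) := by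
    rintro (⟨u, hu⟩ | ⟨u, hu⟩)
    · exact axis_ne_line _ _ hu.symm
    · exact axis_ne_mixed _ _ _ hu.symm
  have disjoint_line_mixed : Disjoint (Set.range (line (K := K))) (Set.range (mixed !i)) := by
    rw [Set.disjoint_left]
    rintro _ ⟨u, rfl⟩ ⟨w, hw⟩
    exact line_ne_mixed _ _ _ hw.symm
  rw [neighborSet_axis, Set.ncard_insert_of_notMem axis_notMem,
    Set.ncard_union_eq disjoint_line_mixed, Set.ncard_range_of_injective line_injective,
    Set.ncard_range_of_injective (mixed_injective _), two_mul]

theorem degIn_plane (S : Set (ZDV (ZMod 2 × ZMod 2 × K))) :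
    degIn (zdGraph (ZMod 2 × ZMod 2 × K)) S plane = (line ⁻¹' S).ncard := by
  rw [degIn_eq_ncard_inter_neighborSet, neighborSet_plane, ← Set.image_preimage_eq_inter_range,
    Set.ncard_image_of_injective _ line_injective]

theorem degIn_axis_of_mixed_notMem [Finite K] {S : Set (ZDV (ZMod 2 × ZMod 2 × K))} {i : Bool}
    (hS : ∀ u, mixed (!i) u ∉ S) :
    degIn (zdGraph (ZMod 2 × ZMod 2 × K)) S (axis i) =
      (line ⁻¹' S).ncard + if axis (!i) ∈ S then 1 else 0 := by
  have mixed_inter : S ∩ Set.range (mixed !i) = ∅ := by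
    rw [← Set.image_preimage_eq_inter_range, Set.image_eq_empty]
    exact Set.eq_empty_of_forall_notMem hS
  have axis_notMem : axis (!i) ∉ line '' (line ⁻¹' S) :=
    fun ⟨u, _, hu⟩ => axis_ne_line _ _ hu.symm
  rw [degIn_eq_ncard_inter_neighborSet, neighborSet_axis]
  split_ifs with h
  · rw [Set.inter_insert_of_mem h, Set.inter_union_distrib_left, mixed_inter, Set.union_empty,
      ← Set.image_preimage_eq_inter_range, Set.ncard_insert_of_notMem axis_notMem,
      Set.ncard_image_of_injective _ line_injective]
  · rw [Set.inter_insert_of_notMem h, Set.inter_union_distrib_left, mixed_inter, Set.union_empty,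
      ← Set.image_preimage_eq_inter_range, Set.ncard_image_of_injective _ line_injective, add_zero]

section Alliances

variable {S : Set (ZDV (ZMod 2 × ZMod 2 × K))} {i : Bool}

theorem mixed_mem_of_axis_notMem (hS : IsDominatingSet (zdGraph (ZMod 2 × ZMod 2 × K)) S)
    (hi : axis (!i) ∉ S) (u : Kˣ) : mixed i u ∈ S := by
  by_contra hu
  obtain ⟨v, hv, huv⟩ := hS _ hu
  rw [← SimpleGraph.mem_neighborSet, neighborSet_mixed, Set.mem_singleton_iff] at huv
  exact hi (huv ▸ hv)

theorem plane_mem_of_line_notMem (hS : IsDominatingSet (zdGraph (ZMod 2 × ZMod 2 × K)) S)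
    (haxis : ∀ i, axis i ∉ S) {u : Kˣ} (hu : line u ∉ S) : plane ∈ S := by
  obtain ⟨v, hv, huv⟩ := hS _ hu
  rw [← SimpleGraph.mem_neighborSet, neighborSet_line] at huv
  obtain rfl | ⟨i, rfl⟩ := huv
  · exact hv
  · exact absurd hv (haxis i)

variable [Finite K]

theorem ncard_preimage_line_add_compl (S : Set (ZDV (ZMod 2 × ZMod 2 × K))) :
    (line ⁻¹' S).ncard + (line ⁻¹' Sᶜ).ncard = Nat.card Kˣ :=
  Set.ncard_add_ncard_compl _

theorem card_units_le_of_axis_mem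
    (hS : IsGlobalDefensiveAlliance (zdGraph (ZMod 2 × ZMod 2 × K)) S)
    (hSc : IsGlobalDefensiveAlliance (zdGraph (ZMod 2 × ZMod 2 × K)) Sᶜ) (hi : axis i ∈ S) :
    Nat.card Kˣ ≤ (line ⁻¹' S).ncard + if axis (!i) ∈ S then 1 else 0 := by
  have leaf_notMem : ∀ u, mixed (!i) u ∉ S :=
    mixed_mem_of_axis_notMem hSc.2 (by simpa using hi)
  have defended := hS.ncard_neighborSet_le hi
  rw [ncard_neighborSet_axis, degIn_axis_of_mixed_notMem leaf_notMem] at defended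
  omega

theorem axis_mem_of_axis_mem
    (hS : IsGlobalDefensiveAlliance (zdGraph (ZMod 2 × ZMod 2 × K)) S)
    (hSc : IsGlobalDefensiveAlliance (zdGraph (ZMod 2 × ZMod 2 × K)) Sᶜ) (hi : axis i ∈ S)
    (j : Bool) : axis j ∈ S := by
  obtain rfl | rfl := Bool.eq_or_eq_not j i
  · exact hi
  by_contra hni
  have hle := card_units_le_of_axis_mem hS hSc hi
  have hle_compl := card_units_le_of_axis_mem hSc ((compl_compl S).symm ▸ hS) hni
  rw [if_neg hni] at hle
  rw [Bool.not_not, if_neg (Set.notMem_compl_iff.2 hi)] at hle_compl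
  have hsum := ncard_preimage_line_add_compl S
  have hpos : 0 < Nat.card Kˣ := Nat.card_pos
  omega

theorem card_units_le_three_of_axis_mem
    (hS : IsGlobalDefensiveAlliance (zdGraph (ZMod 2 × ZMod 2 × K)) S)
    (hSc : IsGlobalDefensiveAlliance (zdGraph (ZMod 2 × ZMod 2 × K)) Sᶜ) (hi : axis i ∈ S) :
    Nat.card Kˣ ≤ 3 := by
  have haxis := axis_mem_of_axis_mem hS hSc hi
  have hle := card_units_le_of_axis_mem hS hSc hi
  rw [if_pos (haxis _)] at hle
  have hsum := ncard_preimage_line_add_compl S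
  obtain hempty | ⟨u, hu⟩ := (line ⁻¹' S).eq_empty_or_nonempty
  · rw [hempty, Set.ncard_empty] at hle
    omega
  · have plane_mem : plane ∈ Sᶜ :=
      plane_mem_of_line_notMem hSc.2 (fun j => not_not.2 (haxis j)) (not_not.2 hu)
    have defended := hSc.ncard_neighborSet_le plane_mem
    rw [ncard_neighborSet_plane, degIn_plane] at defended
    omega

end Alliances

section Splitting

variable {A : Set Kˣ}

/-- The vertices `(1, 0, 0)`, `(0, 1, 0)` and `(0, 0, u)` with `u ∈ A`: for suitable `A`, one side
of a splitting of `Γ(ℤ₂ × ℤ₂ × K)` into two global defensive alliances. -/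
def axesUnionLine (A : Set Kˣ) : Set (ZDV (ZMod 2 × ZMod 2 × K)) :=
  Set.range axis ∪ line '' A

theorem axis_mem_axesUnionLine (A : Set Kˣ) (i : Bool) : axis i ∈ axesUnionLine A :=
  .inl ⟨i, rfl⟩

theorem plane_notMem_axesUnionLine (A : Set Kˣ) : plane ∉ axesUnionLine A := by
  rintro (⟨i, hi⟩ | ⟨u, -, hu⟩)
  · exact axis_ne_plane i hi
  · exact plane_ne_line u hu.symm

theorem mixed_notMem_axesUnionLine (A : Set Kˣ) (i : Bool) (u : Kˣ) :
    mixed i u ∉ axesUnionLine A := by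
  rintro (⟨j, hj⟩ | ⟨w, -, hw⟩)
  · exact axis_ne_mixed j i u hj
  · exact line_ne_mixed w i u hw

theorem line_preimage_axesUnionLine (A : Set Kˣ) : line ⁻¹' axesUnionLine A = A := by
  have range_preimage : line ⁻¹' Set.range (axis (K := K)) = ∅ :=
    Set.eq_empty_of_forall_notMem fun u ⟨i, hi⟩ => axis_ne_line i u hi
  rw [axesUnionLine, Set.preimage_union, range_preimage, Set.empty_union,
    Set.preimage_image_eq A line_injective]

theorem isDominatingSet_axesUnionLine (hA : A.Nonempty) :
    IsDominatingSet (zdGraph (ZMod 2 × ZMod 2 × K)) (axesUnionLine A) := by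
  intro v hv
  rcases eq_axis_or_plane_or_line_or_mixed v with ⟨i, rfl⟩ | rfl | ⟨u, rfl⟩ | ⟨i, u, rfl⟩
  · exact absurd (axis_mem_axesUnionLine A i) hv
  · obtain ⟨u, hu⟩ := hA
    exact ⟨line u, .inr ⟨u, hu, rfl⟩, plane_adj_line u⟩
  · exact ⟨axis true, axis_mem_axesUnionLine A true, (axis_adj_line true u).symm⟩
  · exact ⟨axis !i, axis_mem_axesUnionLine A _, (axis_adj_mixed i u).symm⟩

theorem isDominatingSet_compl_axesUnionLine (A : Set Kˣ) :
    IsDominatingSet (zdGraph (ZMod 2 × ZMod 2 × K)) (axesUnionLine A)ᶜ := by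
  intro v hv
  rcases Set.notMem_compl_iff.1 hv with ⟨i, rfl⟩ | ⟨u, -, rfl⟩
  · exact ⟨mixed (!i) 1, mixed_notMem_axesUnionLine A _ 1, by simpa using axis_adj_mixed (!i) 1⟩
  · exact ⟨plane, plane_notMem_axesUnionLine A, (plane_adj_line u).symm⟩

variable [Finite K]

theorem isGlobalDefensiveAlliance_axesUnionLine (hA : A.Nonempty)
    (hcard : Nat.card Kˣ ≤ A.ncard + 1) :
    IsGlobalDefensiveAlliance (zdGraph (ZMod 2 × ZMod 2 × K)) (axesUnionLine A) := by
  refine ⟨⟨⟨axis true, axis_mem_axesUnionLine A true⟩, fun v hv => ?_⟩,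
    isDominatingSet_axesUnionLine hA⟩
  rw [degIn_compl_le_degIn_add_one_iff]
  rcases hv with ⟨i, rfl⟩ | ⟨u, -, rfl⟩
  · rw [ncard_neighborSet_axis, degIn_axis_of_mixed_notMem (mixed_notMem_axesUnionLine A _),
      line_preimage_axesUnionLine, if_pos (axis_mem_axesUnionLine A _)]
    omega
  · have hpos := degIn_pos (axis_mem_axesUnionLine A true) (axis_adj_line true u).symm
    rw [ncard_neighborSet_line]
    omega

theorem isGlobalDefensiveAlliance_compl_axesUnionLine (hcard : 2 * A.ncard ≤ Nat.card Kˣ + 1) :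
    IsGlobalDefensiveAlliance (zdGraph (ZMod 2 × ZMod 2 × K)) (axesUnionLine A)ᶜ := by
  refine ⟨⟨⟨plane, plane_notMem_axesUnionLine A⟩, fun v hv => ?_⟩,
    isDominatingSet_compl_axesUnionLine A⟩
  rw [degIn_compl_le_degIn_add_one_iff]
  rcases eq_axis_or_plane_or_line_or_mixed v with ⟨i, rfl⟩ | rfl | ⟨u, rfl⟩ | ⟨i, u, rfl⟩
  · exact absurd (axis_mem_axesUnionLine A i) hv
  · have hsum := Set.ncard_add_ncard_compl A
    rw [ncard_neighborSet_plane, degIn_plane, Set.preimage_compl, line_preimage_axesUnionLine]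
    omega
  · have hpos := degIn_pos (S := (axesUnionLine A)ᶜ) (plane_notMem_axesUnionLine A)
      (plane_adj_line u).symm
    rw [ncard_neighborSet_line]
    omega
  · rw [ncard_neighborSet_mixed]
    omega

end Splitting

end ZDV

theorem partitionableGDA_zdGraph_iff_card_le_four (K : Type*) [Field K] [Finite K] :
    PartitionableGDA (zdGraph (ZMod 2 × ZMod 2 × K)) ↔ Nat.card K ≤ 4 := by
  have hunits : Nat.card Kˣ = Nat.card K - 1 := Nat.card_units K
  have htwo : 1 < Nat.card K := Finite.one_lt_card
  rw [partitionableGDA_iff_exists_compl]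
  constructor
  · rintro ⟨S, hS, hSc⟩
    have hle : Nat.card Kˣ ≤ 3 := by
      by_cases hmem : ZDV.axis true ∈ S
      · exact ZDV.card_units_le_three_of_axis_mem hS hSc hmem
      · exact ZDV.card_units_le_three_of_axis_mem hSc ((compl_compl S).symm ▸ hS) hmem
    omega
  · intro hcard
    obtain ⟨A, -, hA⟩ : ∃ A ⊆ (Set.univ : Set Kˣ), A.ncard = Nat.card K / 2 :=
      Set.exists_subset_card_eq (by rw [Set.ncard_univ]; omega)
    have hA_nonempty : A.Nonempty := (Set.ncard_pos).1 (by omega)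
    exact ⟨ZDV.axesUnionLine A,
      ZDV.isGlobalDefensiveAlliance_axesUnionLine hA_nonempty (by omega),
      ZDV.isGlobalDefensiveAlliance_compl_axesUnionLine (by omega)⟩

theorem psiG_zdGraph_le_two (K : Type*) [Field K] :
    psiG (zdGraph (ZMod 2 × ZMod 2 × K)) ≤ 2 := by
  have finite_neighborSet : ((zdGraph (ZMod 2 × ZMod 2 × K)).neighborSet
      (ZDV.mixed true 1)).Finite := by
    rw [ZDV.neighborSet_mixed]
    exact Set.finite_singleton _
  have hle := psiG_le_ncard_neighborSet_add_one finite_neighborSet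
  rwa [ZDV.ncard_neighborSet_mixed] at hle

theorem stmt13_general (K : Type*) [Field K] [Finite K] :
    (PartitionableGDA (zdGraph (ZMod 2 × ZMod 2 × K)) ↔ Nat.card K ≤ 4) ∧
    (Nat.card K ≤ 4 → psiG (zdGraph (ZMod 2 × ZMod 2 × K)) = 2) ∧
    (¬ Nat.card K ≤ 4 → psiG (zdGraph (ZMod 2 × ZMod 2 × K)) = 1) := by
  have hiff := partitionableGDA_zdGraph_iff_card_le_four K
  have hle := psiG_zdGraph_le_two K
  have : Nonempty (ZDV (ZMod 2 × ZMod 2 × K)) := ⟨ZDV.plane⟩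
  have hge := one_le_psiG (zdGraph (ZMod 2 × ZMod 2 × K))
  refine ⟨hiff, ?_, ?_⟩ <;> rw [← hiff, PartitionableGDA] <;> omega

theorem prime_le_four_iff {p : ℕ} (hp : p.Prime) : p ≤ 4 ↔ p = 2 ∨ p = 3 := by
  constructor
  · intro h
    interval_cases p <;> revert hp <;> decide
  · omega

/-- For a prime `p`, `Γ(ℤ₂ × ℤ₂ × ℤ_p)` is partitionable into global
defensive alliances iff `p ∈ {2, 3}`; namely `ψ_g = 2` if `p ∈ {2, 3}` and `ψ_g = 1`
otherwise. -/
theorem stmt13 (p : ℕ) (hp : p.Prime) :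
    (PartitionableGDA (zdGraph (ZMod 2 × ZMod 2 × ZMod p)) ↔ (p = 2 ∨ p = 3)) ∧
    ((p = 2 ∨ p = 3) → psiG (zdGraph (ZMod 2 × ZMod 2 × ZMod p)) = 2) ∧
    (¬ (p = 2 ∨ p = 3) → psiG (zdGraph (ZMod 2 × ZMod 2 × ZMod p)) = 1) := by
  have : Fact p.Prime := ⟨hp⟩
  simpa only [Nat.card_zmod, prime_le_four_iff hp] using stmt13_general (ZMod p)
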